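/- Let (X_n) be a random walk in periodic environment on Z^d. Suppose the induced Markov chain ξ_n on the torus T is irreducible and aperiodic, and that Σ_{y∈Z^d} |y|^2 p_x(y) < ∞ for every x ∈ T. Then (X_n − nν)/√n converges in distribution, as n → ∞, to the centered d-dimensional Gaussian law N(0, Σ), where Σ_{ij} := Σ_{x∈T} π(x) Σ_{y∈Z^d} p_x(y)(y_i − ν_i)(y_j − ν_j) + 2 Σ_{n=1}^∞ Σ_{x,y,z,w∈T} π(x) P_{xy} ((μ_{xy})_i − ν_i) (P^{n−1})_{yz} P_{zw} ((μ_{zw})_j − ν_j), the series being convergent. -/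

import Mathlib

open MeasureTheory Filter Topology ProbabilityTheory

noncomputable section

/-- The torus `T = ℤ^d / (M₁ℤ × ⋯ × M_dℤ)`. -/
abbrev Torus (d : ℕ) (Md : Fin d → ℕ) : Type := ∀ i : Fin d, ZMod (Md i)

/-- Projection of `ℤ^d` onto the torus, `x ↦ x mod M`. -/
def projT {d : ℕ} (Md : Fin d → ℕ) (x : Fin d → ℤ) : Torus d Md :=
  fun i => (x i : ZMod (Md i))

/-- A canonical representative in `ℤ^d` of a point of the torus. -/
def repT {d : ℕ} (Md : Fin d → ℕ) [∀ i, NeZero (Md i)] (t : Torus d Md) : Fin d → ℤ :=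
  fun i => ((t i).val : ℤ)

/-- `p` is a periodic environment on `ℤ^d`: each `p x` is a probability distribution
on `ℤ^d` (the jump distribution at `x`), and `x ↦ p x` is `M`-periodic. -/
def IsPeriodicEnv {d : ℕ} (Md : Fin d → ℕ) (p : (Fin d → ℤ) → (Fin d → ℤ) → ℝ) : Prop :=
  (∀ x y, 0 ≤ p x y) ∧ (∀ x, HasSum (p x) 1) ∧
    ∀ (x y : Fin d → ℤ) (i : Fin d), p (x + Pi.single i (Md i : ℤ)) y = p x y

/-- The transition matrix of the induced Markov chain on the torus:
`P a b = ∑_{z : ℤ^d, a + z ∼ b} p_a(z)` (the jump `z` leads from the class `a`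
to the class `b` iff `a + (z mod M) = b`). -/
def indMatrix {d : ℕ} (Md : Fin d → ℕ) [∀ i, NeZero (Md i)]
    (p : (Fin d → ℤ) → (Fin d → ℤ) → ℝ) : Matrix (Torus d Md) (Torus d Md) ℝ :=
  Matrix.of fun a b => ∑' z : Fin d → ℤ, if a + projT Md z = b then p (repT Md a) z else 0

/-- Irreducibility of a finite-state transition matrix: every state can be reached
from every state with positive probability in finitely many (positively many) steps. -/
def MatIrreducible {T : Type*} [Fintype T] [DecidableEq T] (P : Matrix T T ℝ) : Prop :=
  ∀ a b : T, ∃ n : ℕ, 0 < n ∧ 0 < (P ^ n) a b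

/-- Aperiodicity of a finite-state transition matrix: for every state, the gcd of
the possible return times is `1`. -/
def MatAperiodic {T : Type*} [Fintype T] [DecidableEq T] (P : Matrix T T ℝ) : Prop :=
  ∀ a : T, ∀ m : ℕ, (∀ n : ℕ, 0 < n → 0 < (P ^ n) a a → m ∣ n) → m = 1

/-- `π` is a stationary probability distribution for the transition matrix `P`. -/
def IsStationaryDist {T : Type*} [Fintype T] (P : Matrix T T ℝ) (π : T → ℝ) : Prop :=
  (∀ a, 0 ≤ π a) ∧ (∑ a, π a = 1) ∧ ∀ b, ∑ a, π a * P a b = π b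

/-- The drift vector `ν = ∑_{x ∈ T} π(x) ∑_{y ∈ ℤ^d} p_x(y) y`. -/
def driftVec {d : ℕ} (Md : Fin d → ℕ) [∀ i, NeZero (Md i)]
    (p : (Fin d → ℤ) → (Fin d → ℤ) → ℝ) (π : Torus d Md → ℝ) : Fin d → ℝ :=
  fun i => ∑ a : Torus d Md, π a * ∑' y : Fin d → ℤ, p (repT Md a) y * (y i : ℝ)

/-- `μ` is the law of the random walk in the environment `p` started at `x₀`,
as a probability measure on trajectory space: the probability of every cylinder set
is the corresponding product of one-step transition probabilities. -/
def IsRWPELaw {d : ℕ} (p : (Fin d → ℤ) → (Fin d → ℤ) → ℝ) (x₀ : Fin d → ℤ)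
    (μ : Measure (ℕ → (Fin d → ℤ))) : Prop :=
  IsProbabilityMeasure μ ∧
    ∀ (n : ℕ) (x : ℕ → (Fin d → ℤ)),
      μ {ω | ∀ i ≤ n, ω i = x i} =
        ENNReal.ofReal ((if x 0 = x₀ then (1 : ℝ) else 0) *
          ∏ i ∈ Finset.range n, p (x i) (x (i + 1) - x i))

/-- `e` is one of the `2d` unit vectors of `ℤ^d`. -/
def IsUnitVec {d : ℕ} (e : Fin d → ℤ) : Prop :=
  ∃ i : Fin d, e = Pi.single i 1 ∨ e = -Pi.single i 1

/-- The environment is nearest neighbour: only jumps to nearest neighbours have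
positive probability. -/
def IsNearestNeighbour {d : ℕ} (p : (Fin d → ℤ) → (Fin d → ℤ) → ℝ) : Prop :=
  ∀ x y, p x y ≠ 0 → IsUnitVec y

/-- The average negative gradient `g` of the potential,
`g_i = (1/M_i) ∑_{j=0}^{M_i - 1} log (p_{j eᵢ}(eᵢ) / p_{(j+1) eᵢ}(-eᵢ))`. -/
def avgNegGrad {d : ℕ} (Md : Fin d → ℕ) (p : (Fin d → ℤ) → (Fin d → ℤ) → ℝ) :
    Fin d → ℝ :=
  fun i => (Md i : ℝ)⁻¹ * ∑ j ∈ Finset.range (Md i),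
    Real.log (p (Pi.single i (j : ℤ)) (Pi.single i 1) /
      p (Pi.single i ((j : ℤ) + 1)) (-Pi.single i 1))

/-- The conditional expected jump `μ_{xy}` of the walk, given that the induced chain
jumps from `x` to `y`. -/
def condJump {d : ℕ} (Md : Fin d → ℕ) [∀ i, NeZero (Md i)]
    (p : (Fin d → ℤ) → (Fin d → ℤ) → ℝ) (a b : Torus d Md) : Fin d → ℝ :=
  if indMatrix Md p a b = 0 then 0
  else fun i =>
    (∑' z : Fin d → ℤ, if a + projT Md z = b then p (repT Md a) z * (z i : ℝ) else 0) /
      indMatrix Md p a b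

/-- The `n`-th term of the correlation series appearing in the asymptotic covariance
matrix: `∑_{x,y,z,w ∈ T} π(x) P_{xy} ((μ_{xy})_i - ν_i) (Pⁿ)_{yz} P_{zw} ((μ_{zw})_j - ν_j)`
(so that summing over `n ≥ 0` corresponds to summing `(P^{n-1})_{yz}` over `n ≥ 1`). -/
def covSeriesTerm {d : ℕ} (Md : Fin d → ℕ) [∀ i, NeZero (Md i)]
    (p : (Fin d → ℤ) → (Fin d → ℤ) → ℝ) (π : Torus d Md → ℝ) (n : ℕ) (i j : Fin d) : ℝ :=
  ∑ x : Torus d Md, ∑ y : Torus d Md, ∑ z : Torus d Md, ∑ w : Torus d Md,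
    π x * indMatrix Md p x y * (condJump Md p x y i - driftVec Md p π i) *
      ((indMatrix Md p) ^ n) y z * indMatrix Md p z w *
        (condJump Md p z w j - driftVec Md p π j)

/-- The asymptotic covariance matrix
`Σ_{ij} = ∑_{x∈T} π(x) ∑_y p_x(y) (y_i - ν_i)(y_j - ν_j) + 2 ∑_{n≥1} (correlation terms)`. -/
def covSigma {d : ℕ} (Md : Fin d → ℕ) [∀ i, NeZero (Md i)]
    (p : (Fin d → ℤ) → (Fin d → ℤ) → ℝ) (π : Torus d Md → ℝ) (i j : Fin d) : ℝ :=
  (∑ a : Torus d Md, π a * ∑' y : Fin d → ℤ,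
      p (repT Md a) y * ((y i : ℝ) - driftVec Md p π i) * ((y j : ℝ) - driftVec Md p π j)) +
    2 * ∑' n : ℕ, covSeriesTerm Md p π n i j

section MatrixPart

variable {T : Type*} [Fintype T] [DecidableEq T]

lemma mat_pow_nonneg {P : Matrix T T ℝ} (h0 : ∀ a b, 0 ≤ P a b) (n : ℕ) (a b : T) :
    0 ≤ (P ^ n) a b := by
  induction n generalizing a b with
  | zero => rw [pow_zero, Matrix.one_apply]; split_ifs <;> norm_num
  | succ k ih =>
    rw [pow_succ, Matrix.mul_apply]
    exact Finset.sum_nonneg fun c _ => mul_nonneg (ih a c) (h0 c b)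

lemma mat_pow_pos_add {P : Matrix T T ℝ} (h0 : ∀ a b, 0 ≤ P a b) {m n : ℕ} {a b c : T}
    (h1 : 0 < (P ^ m) a b) (h2 : 0 < (P ^ n) b c) : 0 < (P ^ (m + n)) a c := by
  rw [pow_add, Matrix.mul_apply]
  refine lt_of_lt_of_le (mul_pos h1 h2) ?_
  exact Finset.single_le_sum (f := fun j => (P ^ m) a j * (P ^ n) j c)
    (fun j _ => mul_nonneg (mat_pow_nonneg h0 _ _ _) (mat_pow_nonneg h0 _ _ _))
    (Finset.mem_univ b)

lemma mat_eventually_pos {P : Matrix T T ℝ} (h0 : ∀ a b, 0 ≤ P a b)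
    (hirr : MatIrreducible P) (haper : MatAperiodic P) :
    ∃ N : ℕ, ∀ a b, 0 < (P ^ N) a b := by
  have hret : ∀ a : T, ∃ N : ℕ, ∀ m ≥ N, 0 < (P ^ m) a a := by
    intro a
    set s : Set ℕ := {n | 0 < n ∧ 0 < (P ^ n) a a} with hs
    have hg : Nat.setGcd s = 1 := by
      apply haper a
      intro n hn hp
      exact Nat.setGcd_dvd_of_mem ⟨hn, hp⟩
    obtain ⟨N, hN⟩ := Nat.exists_mem_closure_of_ge s
    refine ⟨N, fun m hm => ?_⟩
    have hmem := hN m hm (by rw [hg]; exact one_dvd _)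
    clear hm
    induction hmem using AddSubmonoid.closure_induction with
    | mem x hx => exact hx.2
    | zero => simp
    | add x y _ _ hx hy => exact mat_pow_pos_add h0 hx hy
  choose R hR using hret
  choose K hK0 hK using hirr
  refine ⟨∑ a, R a + ∑ a, ∑ b, K a b, fun a b => ?_⟩
  have h1 : R a ≤ ∑ a, R a := Finset.single_le_sum (fun _ _ => Nat.zero_le _) (Finset.mem_univ a)
  have h2 : K a b ≤ ∑ a, ∑ b, K a b :=
    (Finset.single_le_sum (f := fun b => K a b) (fun _ _ => Nat.zero_le _)
      (Finset.mem_univ b)).trans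
    (Finset.single_le_sum (f := fun a => ∑ b, K a b) (fun _ _ => Nat.zero_le _)
      (Finset.mem_univ a))
  have h3 : ∑ a, R a + ∑ a, ∑ b, K a b
      = (∑ a, R a + ∑ a, ∑ b, K a b - K a b) + K a b := by omega
  rw [h3]
  exact mat_pow_pos_add h0 (hR a _ (by omega)) (hK a b)

lemma mat_pow_stat {P : Matrix T T ℝ} {π : T → ℝ} (hst : ∀ b, ∑ a, π a * P a b = π b) (n : ℕ) :
    Matrix.vecMul π (P ^ n) = π := by
  have h1 : Matrix.vecMul π P = π := by
    ext b; simpa [Matrix.vecMul, dotProduct] using hst b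
  induction n with
  | zero => simp
  | succ k ih => rw [pow_succ, ← Matrix.vecMul_vecMul, ih, h1]

lemma mat_pow_row {P : Matrix T T ℝ} (hrow : ∀ a, ∑ b, P a b = 1) (n : ℕ) (a : T) :
    ∑ b, (P ^ n) a b = 1 := by
  have h1 : Matrix.mulVec P 1 = 1 := by
    ext b; simpa [Matrix.mulVec, dotProduct] using hrow b
  have h2 : Matrix.mulVec (P ^ n) 1 = 1 := by
    induction n with
    | zero => simp
    | succ k ih => rw [pow_succ, ← Matrix.mulVec_mulVec, h1, ih]
  simpa [Matrix.mulVec, dotProduct] using congrFun h2 a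

lemma mat_summable {P : Matrix T T ℝ} (h0 : ∀ a b, 0 ≤ P a b) (hrow : ∀ a, ∑ b, P a b = 1)
    (hirr : MatIrreducible P) (haper : MatAperiodic P) {π : T → ℝ} (hπ : IsStationaryDist P π)
    (g : T → ℝ) (hg : ∑ a, π a * g a = 0) :
    Summable (fun n : ℕ => Matrix.mulVec (P ^ n) g) := by
  obtain ⟨N, hN⟩ := mat_eventually_pos h0 hirr haper
  obtain ⟨hπ0, hπ1, hπs⟩ := hπ
  have hne : Nonempty T := by
    by_contra h
    rw [not_nonempty_iff] at h
    simp at hπ1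
  have hπle : ∀ a, π a ≤ 1 := fun a => by
    rw [← hπ1]; exact Finset.single_le_sum (fun b _ => hπ0 b) (Finset.mem_univ a)
  obtain ⟨δ, hδ0, hδ⟩ : ∃ δ : ℝ, 0 < δ ∧ ∀ a b, δ ≤ (P ^ N) a b := by
    obtain ⟨q, -, hq⟩ := Finset.exists_min_image (Finset.univ : Finset (T × T))
      (fun q => (P ^ N) q.1 q.2) Finset.univ_nonempty
    exact ⟨_, hN q.1 q.2, fun a b => hq (a, b) (Finset.mem_univ _)⟩
  have hcon : ∀ h : T → ℝ, ‖Matrix.mulVec P h‖ ≤ ‖h‖ := by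
    intro h
    rw [pi_norm_le_iff_of_nonneg (norm_nonneg _)]
    intro a
    calc ‖Matrix.mulVec P h a‖ = ‖∑ b, P a b * h b‖ := rfl
      _ ≤ ∑ b, ‖P a b * h b‖ := norm_sum_le _ _
      _ ≤ ∑ b, P a b * ‖h‖ := by
          apply Finset.sum_le_sum; intro b _
          rw [norm_mul, Real.norm_of_nonneg (h0 a b)]
          exact mul_le_mul_of_nonneg_left (norm_le_pi_norm h b) (h0 a b)
      _ = ‖h‖ := by rw [← Finset.sum_mul, hrow, one_mul]
  have hconN : ∀ h : T → ℝ, ∑ a, π a * h a = 0 →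
      ‖Matrix.mulVec (P ^ N) h‖ ≤ (1 - δ) * ‖h‖ := by
    intro h hh
    have hδ1 : δ ≤ 1 := by
      obtain ⟨a⟩ := hne
      refine (hδ a a).trans ?_
      rw [← mat_pow_row hrow N a]
      exact Finset.single_le_sum (fun b _ => mat_pow_nonneg h0 N a b) (Finset.mem_univ a)
    rw [pi_norm_le_iff_of_nonneg (mul_nonneg (by linarith) (norm_nonneg _))]
    intro a
    have hk : ∀ b, 0 ≤ (P ^ N) a b - δ * π b := fun b => by
      have := hδ a b
      have := hπle b
      nlinarith
    calc ‖Matrix.mulVec (P ^ N) h a‖ = ‖∑ b, ((P ^ N) a b - δ * π b) * h b‖ := by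
          congr 1
          simp only [sub_mul, Finset.sum_sub_distrib, mul_assoc, ← Finset.mul_sum]
          rw [hh]; simp [Matrix.mulVec, dotProduct]
      _ ≤ ∑ b, ‖((P ^ N) a b - δ * π b) * h b‖ := norm_sum_le _ _
      _ ≤ ∑ b, ((P ^ N) a b - δ * π b) * ‖h‖ := by
          apply Finset.sum_le_sum; intro b _
          rw [norm_mul, Real.norm_of_nonneg (hk b)]
          exact mul_le_mul_of_nonneg_left (norm_le_pi_norm h b) (hk b)
      _ = (1 - δ) * ‖h‖ := by
          rw [← Finset.sum_mul, Finset.sum_sub_distrib, ← Finset.mul_sum, hπ1,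
            mat_pow_row hrow, mul_one]
  have horth : ∀ n, ∑ a, π a * Matrix.mulVec (P ^ n) g a = 0 := by
    intro n
    have := Matrix.dotProduct_mulVec π (P ^ n) g
    rw [mat_pow_stat hπs] at this
    simp only [dotProduct] at this
    rw [this, hg]
  set A : ℕ → ℝ := fun n => ‖Matrix.mulVec (P ^ n) g‖ with hA
  have hAanti : ∀ n, A n ≤ A 0 := by
    intro n
    induction n with
    | zero => exact le_rfl
    | succ k ih =>
      refine le_trans ?_ ih
      simp only [hA]
      rw [pow_succ', ← Matrix.mulVec_mulVec]
      exact hcon _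
  have hAN : ∀ n, A (N + n) ≤ (1 - δ) * A n := by
    intro n
    simp only [hA]
    rw [pow_add, ← Matrix.mulVec_mulVec]
    exact hconN _ (horth n)
  have hA0 : ∀ n, 0 ≤ A n := fun n => norm_nonneg _
  have hsum : ∀ m, ∑ n ∈ Finset.range m, A n ≤ N * A 0 / δ := by
    intro m
    have e1 : ∑ n ∈ Finset.range m, A n ≤ ∑ n ∈ Finset.range (N + m), A n :=
      Finset.sum_le_sum_of_subset_of_nonneg
        (Finset.range_mono (by omega)) (fun i _ _ => hA0 i)
    rw [Finset.sum_range_add] at e1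
    have e2 : ∑ n ∈ Finset.range N, A n ≤ N * A 0 := by
      refine (Finset.sum_le_sum fun i _ => hAanti i).trans ?_
      simp
    have e3 : ∑ n ∈ Finset.range m, A (N + n) ≤ (1 - δ) * ∑ n ∈ Finset.range m, A n := by
      rw [Finset.mul_sum]; exact Finset.sum_le_sum fun i _ => hAN i
    rw [le_div_iff₀ hδ0]
    linarith
  exact Summable.of_norm (summable_of_sum_range_le hA0 hsum)

/-- Solution of the Poisson equation. -/
lemma mat_poisson {P : Matrix T T ℝ} (g : T → ℝ)
    (hs : Summable (fun n : ℕ => Matrix.mulVec (P ^ n) g)) :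
    Matrix.mulVec P (∑' n : ℕ, Matrix.mulVec (P ^ n) g) + g
      = ∑' n : ℕ, Matrix.mulVec (P ^ n) g := by
  have h1 : Matrix.mulVec P (∑' n : ℕ, Matrix.mulVec (P ^ n) g)
      = ∑' n : ℕ, Matrix.mulVec (P ^ (n + 1)) g := by
    have := (LinearMap.toContinuousLinearMap (Matrix.mulVecLin P)).map_tsum hs
    simp only [LinearMap.coe_toContinuousLinearMap', Matrix.mulVecLin_apply] at this
    rw [this]
    simp only [Matrix.mulVec_mulVec, ← pow_succ']
  rw [h1, hs.tsum_eq_zero_add]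
  simp [add_comm]

end MatrixPart
section MarkovPart

lemma rwpe_pair {d : ℕ} {p : (Fin d → ℤ) → (Fin d → ℤ) → ℝ} (hp0 : ∀ x y, 0 ≤ p x y)
    {x₀ : Fin d → ℤ} {μ : Measure (ℕ → (Fin d → ℤ))} (hμ : IsRWPELaw p x₀ μ)
    (n : ℕ) (x y : Fin d → ℤ) :
    μ {ω | ω n = x ∧ ω (n + 1) = y} = μ {ω | ω n = x} * ENNReal.ofReal (p x (y - x)) := by
  classical
  obtain ⟨hprob, hcyl⟩ := hμ
  set r : (ℕ → (Fin d → ℤ)) → (Fin (n + 1) → (Fin d → ℤ)) := fun ω i => ω i with hr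
  have hrm : Measurable r := by
    rw [measurable_pi_iff]; intro i; exact measurable_pi_apply _
  have key : ∀ E : Set (ℕ → (Fin d → ℤ)), ∑' w, μ (r ⁻¹' {w} ∩ E) = μ E := by
    intro E
    have h := tsum_measure_preimage_singleton (μ := μ.restrict E) (f := r)
      (s := Set.univ) Set.countable_univ (fun y _ => hrm (measurableSet_singleton y))
    rw [tsum_univ (fun b => (μ.restrict E) (r ⁻¹' {b}))] at h
    simp only [Set.preimage_univ, Measure.restrict_apply_univ] at h
    rw [← h]
    congr 1; ext w
    rw [Measure.restrict_apply (hrm (measurableSet_singleton w))]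
  rw [← key {ω | ω n = x ∧ ω (n + 1) = y}, ← key {ω | ω n = x}, ← ENNReal.tsum_mul_right]
  congr 1; ext w
  by_cases hw : w (Fin.last n) = x
  · set xs : ℕ → (Fin d → ℤ) := fun i => if h : i < n + 1 then w ⟨i, h⟩ else y with hxs
    have hxsn : xs n = x := by
      simp only [hxs]; rw [dif_pos (by omega)]; exact hw
    have hxsn1 : xs (n + 1) = y := by
      simp only [hxs]; rw [dif_neg (by omega)]
    have hiff : ∀ ω, r ω = w ↔ ∀ i ≤ n, ω i = xs i := by
      intro ω
      constructor
      · intro h i hi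
        simp only [hxs]; rw [dif_pos (by omega), ← h]
      · intro h
        ext1 i
        have := h i (by omega)
        simp only [hxs] at this; rw [dif_pos (by omega)] at this
        exact this
    have e1 : r ⁻¹' {w} ∩ {ω | ω n = x} = {ω | ∀ i ≤ n, ω i = xs i} := by
      ext ω
      simp only [Set.mem_inter_iff, Set.mem_preimage, Set.mem_singleton_iff, Set.mem_ofPred_eq, hiff]
      constructor
      · exact fun h => h.1
      · exact fun h => ⟨h, by rw [h n le_rfl, hxsn]⟩
    have e2 : r ⁻¹' {w} ∩ {ω | ω n = x ∧ ω (n + 1) = y} = {ω | ∀ i ≤ n + 1, ω i = xs i} := by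
      ext ω
      simp only [Set.mem_inter_iff, Set.mem_preimage, Set.mem_singleton_iff, Set.mem_ofPred_eq, hiff]
      constructor
      · rintro ⟨h1, h2, h3⟩ i hi
        rcases Nat.lt_or_ge i (n + 1) with h | h
        · exact h1 i (by omega)
        · have : i = n + 1 := by omega
          rw [this, h3, hxsn1]
      · exact fun h => ⟨fun i hi => h i (by omega), by rw [h n (by omega), hxsn],
          by rw [h (n + 1) le_rfl, hxsn1]⟩
    rw [e1, e2, hcyl, hcyl, Finset.prod_range_succ, hxsn, hxsn1, ← ENNReal.ofReal_mul, mul_assoc]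
    apply mul_nonneg
    · split_ifs <;> norm_num
    · exact Finset.prod_nonneg fun i _ => hp0 _ _
  · have e1 : r ⁻¹' {w} ∩ {ω | ω n = x} = ∅ := by
      ext ω
      simp only [Set.mem_inter_iff, Set.mem_preimage, Set.mem_singleton_iff, Set.mem_ofPred_eq,
        Set.mem_empty_iff_false, iff_false]
      rintro ⟨h1, h2⟩
      apply hw; rw [← h1, ← h2]; rfl
    have e2 : r ⁻¹' {w} ∩ {ω | ω n = x ∧ ω (n + 1) = y} = ∅ := by
      refine Set.eq_empty_of_subset_empty ?_
      rw [← e1]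
      exact fun ω h => ⟨h.1, h.2.1⟩
    rw [e1, e2]; simp

lemma rwpe_step {d : ℕ} {p : (Fin d → ℤ) → (Fin d → ℤ) → ℝ} (hp0 : ∀ x y, 0 ≤ p x y)
    (hp1 : ∀ x, HasSum (p x) 1)
    {x₀ : Fin d → ℤ} {μ : Measure (ℕ → (Fin d → ℤ))} (hμ : IsRWPELaw p x₀ μ)
    (n : ℕ) (F : (Fin d → ℤ) → ℂ) (C : ℝ) (hF : ∀ x, ‖F x‖ ≤ C) :
    ∫ ω, F (ω (n + 1)) ∂μ = ∫ ω, ∑' z, (p (ω n) z : ℂ) * F (ω n + z) ∂μ := by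
  have hprob := hμ.1
  set G : (Fin d → ℤ) → ℂ := fun x => ∑' z, (p x z : ℂ) * F (x + z) with hG
  have hFs : ∀ x, Summable fun z => ‖(p x z : ℂ) * F (x + z)‖ := by
    intro x
    refine Summable.of_nonneg_of_le (fun _ => norm_nonneg _) (fun z => ?_)
      ((hp1 x).summable.mul_right C)
    rw [norm_mul, Complex.norm_real, Real.norm_of_nonneg (hp0 x z)]
    exact mul_le_mul_of_nonneg_left (hF _) (hp0 x z)
  have hGb : ∀ x, ‖G x‖ ≤ C := by
    intro x
    refine (norm_tsum_le_tsum_norm (hFs x)).trans ?_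
    have : C = ∑' z, p x z * C := by rw [tsum_mul_right, (hp1 x).tsum_eq, one_mul]
    rw [this]
    refine (hFs x).tsum_le_tsum (fun z => ?_) ((hp1 x).summable.mul_right C)
    rw [norm_mul, Complex.norm_real, Real.norm_of_nonneg (hp0 x z)]
    exact mul_le_mul_of_nonneg_left (hF _) (hp0 x z)
  have hm : Measurable fun ω : ℕ → (Fin d → ℤ) => (ω n, ω (n + 1)) :=
    (measurable_pi_apply n).prodMk (measurable_pi_apply (n + 1))
  have hm1 : Measurable fun ω : ℕ → (Fin d → ℤ) => ω n := measurable_pi_apply n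
  have hP2 : IsProbabilityMeasure (μ.map fun ω => (ω n, ω (n + 1))) :=
    Measure.isProbabilityMeasure_map hm.aemeasurable
  have hP1 : IsProbabilityMeasure (μ.map fun ω => ω n) :=
    Measure.isProbabilityMeasure_map hm1.aemeasurable
  have hpair : ∀ x y, (μ.map fun ω => (ω n, ω (n + 1))).real {(x, y)}
      = (μ.map fun ω => ω n).real {x} * p x (y - x) := by
    intro x y
    have h := rwpe_pair hp0 hμ n x y
    simp only [Measure.real]
    rw [Measure.map_apply hm (measurableSet_singleton _),
      Measure.map_apply hm1 (measurableSet_singleton _)]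
    have e1 : (fun ω : ℕ → (Fin d → ℤ) => (ω n, ω (n + 1))) ⁻¹' {(x, y)}
        = {ω | ω n = x ∧ ω (n + 1) = y} := by
      ext ω; simp
    have e2 : (fun ω : ℕ → (Fin d → ℤ) => ω n) ⁻¹' {x} = {ω | ω n = x} := by
      ext ω; simp
    rw [e1, e2, h, ENNReal.toReal_mul, ENNReal.toReal_ofReal (hp0 _ _)]
  have L : ∫ ω, F (ω (n + 1)) ∂μ = ∫ q, F q.2 ∂(μ.map fun ω => (ω n, ω (n + 1))) := by
    rw [integral_map hm.aemeasurable (Measurable.of_discrete).aestronglyMeasurable]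
  have R : ∫ ω, G (ω n) ∂μ = ∫ q, G q ∂(μ.map fun ω => ω n) := by
    rw [integral_map hm1.aemeasurable (Measurable.of_discrete).aestronglyMeasurable]
  have hsum : Summable fun q : (Fin d → ℤ) × (Fin d → ℤ) =>
      (μ.map fun ω => (ω n, ω (n + 1))).real {q} := by
    apply ENNReal.summable_toReal
    have h := tsum_measure_preimage_singleton (μ := μ.map fun ω => (ω n, ω (n + 1))) (f := id)
      (s := Set.univ) Set.countable_univ (fun y _ => measurableSet_singleton y)
    rw [tsum_univ (fun b => (μ.map fun ω => (ω n, ω (n + 1))) (id ⁻¹' {b}))] at h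
    simp only [Set.preimage_id] at h
    rw [h]; exact measure_ne_top _ _
  change _ = ∫ ω, G (ω n) ∂μ
  have I1 : Integrable (fun q : (Fin d → ℤ) × (Fin d → ℤ) => F q.2)
      (μ.map fun ω => (ω n, ω (n + 1))) :=
    Integrable.of_bound (Measurable.of_discrete).aestronglyMeasurable C
      (ae_of_all _ fun q => hF q.2)
  have I2 : Integrable G (μ.map fun ω => ω n) :=
    Integrable.of_bound (Measurable.of_discrete).aestronglyMeasurable C
      (ae_of_all _ fun q => hGb q)
  rw [L, R, integral_countable I1, integral_countable I2, Summable.tsum_prod]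
  · congr 1; ext1 x
    simp only [hpair, hG]
    rw [← (Equiv.addLeft x).tsum_eq]
    simp only [Equiv.coe_addLeft, add_sub_cancel_left, mul_smul]
    rw [tsum_const_smul'']
    simp
  · apply Summable.of_norm
    refine Summable.of_nonneg_of_le (fun _ => norm_nonneg _) (fun q => ?_) (hsum.mul_right C)
    rw [norm_smul, Real.norm_of_nonneg measureReal_nonneg]
    exact mul_le_mul_of_nonneg_left (hF _) measureReal_nonneg

lemma rwpe_init {d : ℕ} {p : (Fin d → ℤ) → (Fin d → ℤ) → ℝ}
    {x₀ : Fin d → ℤ} {μ : Measure (ℕ → (Fin d → ℤ))} (hμ : IsRWPELaw p x₀ μ) :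
    ∀ᵐ ω ∂μ, ω 0 = x₀ := by
  have hprob := hμ.1
  have h := hμ.2 0 (fun _ => x₀)
  simp only [Nat.le_zero, forall_eq, if_true, Finset.range_zero, Finset.prod_empty, mul_one,
    ENNReal.ofReal_one] at h
  rw [ae_iff_measure_eq]
  · rw [h, measure_univ]
  · have hm : Measurable fun ω : ℕ → (Fin d → ℤ) => ω 0 := measurable_pi_apply 0
    exact (hm (measurableSet_singleton x₀)).nullMeasurableSet

lemma env_periodic {d : ℕ} {Md : Fin d → ℕ} {p : (Fin d → ℤ) → (Fin d → ℤ) → ℝ}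
    (h : ∀ (x y : Fin d → ℤ) (i : Fin d), p (x + Pi.single i (Md i : ℤ)) y = p x y)
    (k : Fin d → ℤ) (x y : Fin d → ℤ) : p (x + fun i => Md i * k i) y = p x y := by
  have h1 : ∀ (i : Fin d) (m : ℤ) (x : Fin d → ℤ), p (x + Pi.single i (Md i * m)) y = p x y := by
    intro i m
    induction m using Int.induction_on with
    | zero => intro x; simp
    | succ m ih =>
      intro x
      rw [mul_add, mul_one, Pi.single_add, ← add_assoc, h, ih]
    | pred m ih =>
      intro x
      rw [← h, add_assoc, ← Pi.single_add, ← ih x]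
      congr 3; ring
  have h2 : ∀ (s : Finset (Fin d)) (x : Fin d → ℤ),
      p (x + ∑ i ∈ s, Pi.single i (Md i * k i)) y = p x y := by
    intro s
    induction s using Finset.induction_on with
    | empty => intro x; simp
    | insert i s hi ih =>
      intro x
      rw [Finset.sum_insert hi, ← add_assoc, ih, h1]
  have := h2 Finset.univ x
  rwa [Finset.univ_sum_single] at this

lemma env_rep {d : ℕ} {Md : Fin d → ℕ} [∀ i, NeZero (Md i)]
    {p : (Fin d → ℤ) → (Fin d → ℤ) → ℝ}
    (h : ∀ (x y : Fin d → ℤ) (i : Fin d), p (x + Pi.single i (Md i : ℤ)) y = p x y)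
    (x : Fin d → ℤ) : p (repT Md (projT Md x)) = p x := by
  ext y
  rw [← env_periodic h (fun i => x i / Md i)]
  congr 1; ext i
  simp only [Pi.add_apply, repT, projT, ZMod.val_intCast]
  exact Int.emod_add_mul_ediv _ _

lemma projT_add {d : ℕ} (Md : Fin d → ℕ) (x y : Fin d → ℤ) :
    projT Md (x + y) = projT Md x + projT Md y := by
  ext i; simp [projT]

end MarkovPart
section AnalysisPart

lemma exp_taylor_two (x : ℝ) :
    ‖Complex.exp (Complex.I * x) - 1 - Complex.I * x + (x : ℂ) ^ 2 / 2‖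
      ≤ 4 * (x ^ 2 * min 1 |x|) := by
  have hI : ‖Complex.I * (x : ℂ)‖ = |x| := by simp
  rcases le_or_gt |x| 1 with h | h
  · have hb := Complex.exp_bound (x := Complex.I * x) (by rw [hI]; exact h) (n := 3) (by norm_num)
    have e : Complex.exp (Complex.I * x)
        - ∑ m ∈ Finset.range 3, (Complex.I * (x : ℂ)) ^ m / (m.factorial : ℂ)
        = Complex.exp (Complex.I * x) - 1 - Complex.I * x + (x : ℂ) ^ 2 / 2 := by
      simp [Finset.sum_range_succ, mul_pow, Complex.I_sq, Nat.factorial]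
      ring
    rw [e, hI] at hb
    refine hb.trans ?_
    have e3 : x ^ 2 * |x| = |x| ^ 3 := by rw [← sq_abs x]; ring
    rw [min_eq_right h, e3]
    have : 0 ≤ |x| ^ 3 := by positivity
    norm_num [Nat.factorial]
    nlinarith
  · rw [min_eq_left h.le, mul_one]
    have h1 : ‖Complex.exp (Complex.I * x)‖ = 1 := by
      rw [mul_comm]; exact Complex.norm_exp_ofReal_mul_I x
    have h2 : ‖(x : ℂ) ^ 2 / 2‖ = x ^ 2 / 2 := by
      rw [norm_div, norm_pow, Complex.norm_real, Real.norm_eq_abs, sq_abs]; norm_num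
    have h3 := norm_add_le (Complex.exp (Complex.I * x) - 1 - Complex.I * x) ((x : ℂ) ^ 2 / 2)
    have h4 := norm_sub_le (Complex.exp (Complex.I * x) - 1) (Complex.I * x)
    have h5 := norm_sub_le (Complex.exp (Complex.I * x)) 1
    rw [norm_one] at h5
    have : x ^ 2 = |x| ^ 2 := (sq_abs x).symm
    nlinarith

/-- second order pseudo-eigenvector -/
def vth (u w : ℝ) (θ : ℝ) : ℂ := 1 + Complex.I * θ * u + (θ : ℂ) ^ 2 * w

lemma vth_sub_one {u w K θ : ℝ} (hu : |u| ≤ K) (hw : |w| ≤ K) (hθ : |θ| ≤ 1) :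
    ‖vth u w θ - 1‖ ≤ |θ| * (2 * K) := by
  have e : vth u w θ - 1 = Complex.I * θ * u + (θ : ℂ) ^ 2 * w := by unfold vth; ring
  rw [e]
  refine (norm_add_le _ _).trans ?_
  simp only [norm_mul, norm_pow, Complex.norm_real, Complex.norm_I, Real.norm_eq_abs, one_mul]
  have h1 : |θ| * |u| ≤ |θ| * K := mul_le_mul_of_nonneg_left hu (abs_nonneg _)
  have h0 : |θ| ^ 2 ≤ |θ| := by nlinarith [abs_nonneg θ]
  have h2 : |θ| ^ 2 * |w| ≤ |θ| * K := mul_le_mul h0 hw (abs_nonneg _) (abs_nonneg _)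
  linarith

lemma term_bound {u w K θ y : ℝ} (hu : |u| ≤ K) (hw : |w| ≤ K) (hθ : |θ| ≤ 1) :
    ‖Complex.exp (Complex.I * (θ * y : ℝ)) * vth u w θ
      - (1 + Complex.I * θ * ((y + u : ℝ) : ℂ) + (θ : ℂ) ^ 2 * ((w - y * u - y ^ 2 / 2 : ℝ) : ℂ))‖
    ≤ θ ^ 2 * (4 * (1 + 2 * K) * (y ^ 2 * min 1 |θ * y|) + |θ| * (2 * K * (1 + y ^ 2))) := by
  have hK : 0 ≤ K := (abs_nonneg _).trans hu
  set R : ℂ := Complex.exp (Complex.I * (θ * y : ℝ)) - 1 - Complex.I * (θ * y : ℝ)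
    + ((θ * y : ℝ) : ℂ) ^ 2 / 2 with hR
  have hRb : ‖R‖ ≤ 4 * ((θ * y) ^ 2 * min 1 |θ * y|) := exp_taylor_two (θ * y)
  have e : Complex.exp (Complex.I * (θ * y : ℝ)) * vth u w θ
      - (1 + Complex.I * θ * ((y + u : ℝ) : ℂ) + (θ : ℂ) ^ 2 * ((w - y * u - y ^ 2 / 2 : ℝ) : ℂ))
      = R * vth u w θ + (θ : ℂ) ^ 3 * (Complex.I * (y * w - y ^ 2 * u / 2 : ℝ)
          - ((θ * y ^ 2 * w / 2 : ℝ) : ℂ)) := by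
    have : Complex.exp (Complex.I * (θ * y : ℝ)) = R + 1 + Complex.I * (θ * y : ℝ)
      - ((θ * y : ℝ) : ℂ) ^ 2 / 2 := by rw [hR]; ring
    rw [this]
    unfold vth
    push_cast
    ring_nf
    simp only [Complex.I_sq]
    ring
  rw [e]
  have hv : ‖vth u w θ‖ ≤ 1 + 2 * K := by
    have h := vth_sub_one hu hw hθ
    have h2 := norm_add_le (vth u w θ - 1) 1
    rw [sub_add_cancel, norm_one] at h2
    nlinarith
  have h1 : ‖R * vth u w θ‖ ≤ 4 * ((θ * y) ^ 2 * min 1 |θ * y|) * (1 + 2 * K) := by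
    rw [norm_mul]
    exact mul_le_mul hRb hv (norm_nonneg _) (by positivity)
  have h2 : ‖Complex.I * ((y * w - y ^ 2 * u / 2 : ℝ) : ℂ)
          - ((θ * y ^ 2 * w / 2 : ℝ) : ℂ)‖ ≤ 2 * K * (1 + y ^ 2) := by
    refine (norm_sub_le _ _).trans ?_
    rw [norm_mul, Complex.norm_I, one_mul, Complex.norm_real, Complex.norm_real,
      Real.norm_eq_abs, Real.norm_eq_abs]
    have a1 := abs_sub (y * w) (y ^ 2 * u / 2)
    have a2 : |y * w| ≤ |y| * K := by
      rw [abs_mul]; exact mul_le_mul_of_nonneg_left hw (abs_nonneg _)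
    have a3 : |y ^ 2 * u / 2| ≤ y ^ 2 * K / 2 := by
      rw [abs_div, abs_mul, abs_of_nonneg (sq_nonneg y), abs_two]
      have := mul_le_mul_of_nonneg_left hu (sq_nonneg y)
      linarith
    have a4 : |θ * y ^ 2 * w / 2| ≤ y ^ 2 * K / 2 := by
      rw [abs_div, abs_mul, abs_mul, abs_of_nonneg (sq_nonneg y), abs_two]
      have b1 : |θ| * y ^ 2 ≤ y ^ 2 := by nlinarith [sq_nonneg y]
      have := mul_le_mul b1 hw (abs_nonneg _) (sq_nonneg y)
      linarith
    have a5 : |y| ≤ 1 + y ^ 2 := by rw [← sq_abs y]; nlinarith [sq_nonneg (|y| - 1), abs_nonneg y]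
    have a6 := mul_le_mul_of_nonneg_right a5 hK
    nlinarith
  refine (norm_add_le _ _).trans ?_
  rw [norm_mul ((θ : ℂ) ^ 3), norm_pow, Complex.norm_real, Real.norm_eq_abs]
  have h3 : |θ| ^ 3 = θ ^ 2 * |θ| := by rw [← sq_abs θ]; ring
  rw [h3]
  have h4 := mul_le_mul_of_nonneg_left h2 (show 0 ≤ θ ^ 2 * |θ| by positivity)
  nlinarith

lemma quasi_eigen {T Z : Type*} [Fintype T] (W : T → Z → ℝ) (hW0 : ∀ a z, 0 ≤ W a z)
    (hW1 : ∀ a, HasSum (W a) 1) (y : Z → ℝ) (hy1 : ∀ a, Summable fun z => W a z * y z)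
    (hy : ∀ a, Summable fun z => W a z * y z ^ 2)
    (b : T → Z → T) (u w : T → ℝ) (K σ2 : ℝ) (hu : ∀ a, |u a| ≤ K) (hw : ∀ a, |w a| ≤ K)
    (E1 : ∀ a, ∑' z, W a z * (y z + u (b a z)) = u a)
    (E2 : ∀ a, ∑' z, W a z * (w (b a z) - y z * u (b a z) - y z ^ 2 / 2) = w a - σ2 / 2) :
    ∃ η : ℝ → ℝ, Tendsto η (𝓝 0) (𝓝 0) ∧ ∀ θ : ℝ, |θ| ≤ 1 → ∀ a,
      ‖∑' z, (W a z : ℂ) * (Complex.exp (Complex.I * (θ * y z : ℝ)) * vth (u (b a z)) (w (b a z)) θ)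
        - (1 - (θ : ℂ) ^ 2 * (σ2 / 2 : ℝ)) * vth (u a) (w a) θ‖ ≤ θ ^ 2 * η θ := by
  classical
  rcases isEmpty_or_nonempty T with hT | ⟨⟨a₀⟩⟩
  · exact ⟨0, tendsto_const_nhds, fun θ _ a => isEmptyElim a⟩
  have hK : 0 ≤ K := (abs_nonneg _).trans (hu a₀)
  set h : ℝ → Z → ℝ := fun θ z =>
    4 * (1 + 2 * K) * (y z ^ 2 * min 1 |θ * y z|) + |θ| * (2 * K * (1 + y z ^ 2)) with hh
  have hh0 : ∀ θ z, 0 ≤ h θ z := fun θ z => by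
    simp only [hh]; positivity
  set B : Z → ℝ := fun z => 4 * (1 + 2 * K) * y z ^ 2 + 2 * K * (1 + y z ^ 2) with hB
  have hhB : ∀ θ, |θ| ≤ 1 → ∀ z, h θ z ≤ B z := by
    intro θ hθ z
    simp only [hh, hB]
    have a1 : y z ^ 2 * min 1 |θ * y z| ≤ y z ^ 2 * 1 :=
      mul_le_mul_of_nonneg_left (min_le_left _ _) (sq_nonneg _)
    have a2 : |θ| * (2 * K * (1 + y z ^ 2)) ≤ 1 * (2 * K * (1 + y z ^ 2)) :=
      mul_le_mul_of_nonneg_right hθ (by positivity)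
    have a3 := mul_le_mul_of_nonneg_left a1 (show 0 ≤ 4 * (1 + 2 * K) by positivity)
    linarith
  have hWB : ∀ a, Summable fun z => W a z * B z := by
    intro a
    have := ((hy a).mul_left (4 * (1 + 2 * K) + 2 * K)).add ((hW1 a).summable.mul_left (2 * K))
    refine this.congr fun z => ?_
    simp only [hB]; ring
  have hWh : ∀ θ, |θ| ≤ 1 → ∀ a, Summable fun z => W a z * h θ z := fun θ hθ a =>
    Summable.of_nonneg_of_le (fun z => mul_nonneg (hW0 a z) (hh0 θ z))
      (fun z => mul_le_mul_of_nonneg_left (hhB θ hθ z) (hW0 a z)) (hWB a)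
  have hev : ∀ᶠ θ : ℝ in 𝓝 0, |θ| ≤ 1 := by
    have := Metric.closedBall_mem_nhds (0 : ℝ) one_pos
    filter_upwards [this] with θ hθ
    simpa using hθ
  refine ⟨fun θ => ∑ a, ∑' z, W a z * h θ z + |θ| * (|σ2| * K), ?_, ?_⟩
  · have t1 : ∀ a, Tendsto (fun θ => ∑' z, W a z * h θ z) (𝓝 0) (𝓝 0) := by
      intro a
      have := tendsto_tsum_of_dominated_convergence (𝓕 := 𝓝 (0 : ℝ))
        (f := fun θ z => W a z * h θ z) (g := fun _ => 0) (hWB a) ?_ ?_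
      · simpa using this
      · intro z
        have hc : Continuous fun θ => W a z * h θ z := by
          simp only [hh]; fun_prop
        have := hc.tendsto 0
        simpa [hh] using this
      · filter_upwards [hev] with θ hθ z
        rw [Real.norm_of_nonneg (mul_nonneg (hW0 a z) (hh0 θ z))]
        exact mul_le_mul_of_nonneg_left (hhB θ hθ z) (hW0 a z)
    have t2 : Tendsto (fun θ : ℝ => |θ| * (|σ2| * K)) (𝓝 0) (𝓝 0) := by
      have hc : Continuous fun θ : ℝ => |θ| * (|σ2| * K) := by fun_prop
      simpa using hc.tendsto 0
    have t3 := (tendsto_finsetSum Finset.univ fun a _ => t1 a).add t2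
    simpa using t3
  · intro θ hθ a
    have hsu : Summable fun z => W a z * (y z + u (b a z)) := by
      have : Summable fun z => W a z * u (b a z) := by
        refine Summable.of_norm_bounded ((hW1 a).summable.mul_right K) fun z => ?_
        rw [norm_mul, Real.norm_of_nonneg (hW0 a z)]
        exact mul_le_mul_of_nonneg_left (hu _) (hW0 a z)
      refine ((hy1 a).add this).congr fun z => by ring
    have hsw : Summable fun z => W a z * (w (b a z) - y z * u (b a z) - y z ^ 2 / 2) := by
      refine Summable.of_norm_bounded (g := fun z => K * W a z + (K + 1) * (W a z + W a z * y z ^ 2))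
        (((hW1 a).summable.mul_left K).add (((hW1 a).summable.add (hy a)).mul_left _)) fun z => ?_
      rw [norm_mul, Real.norm_of_nonneg (hW0 a z), Real.norm_eq_abs]
      have c1 := abs_sub (w (b a z) - y z * u (b a z)) (y z ^ 2 / 2)
      have c2 := abs_sub (w (b a z)) (y z * u (b a z))
      have c3 : |y z * u (b a z)| ≤ |y z| * K := by
        rw [abs_mul]; exact mul_le_mul_of_nonneg_left (hu _) (abs_nonneg _)
      have c4 : |y z| ≤ 1 + y z ^ 2 := by
        rw [← sq_abs (y z)]; nlinarith [sq_nonneg (|y z| - 1), abs_nonneg (y z)]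
      have c5 : |y z ^ 2 / 2| = y z ^ 2 / 2 := abs_of_nonneg (by positivity)
      have c6 := mul_le_mul_of_nonneg_right c4 hK
      have c7 : |w (b a z) - y z * u (b a z) - y z ^ 2 / 2| ≤ K + (K + 1) * (1 + y z ^ 2) := by
        nlinarith [hw (b a z), sq_nonneg (y z)]
      have := mul_le_mul_of_nonneg_left c7 (hW0 a z)
      linarith
    have hs0 : Summable fun z => (W a z : ℂ) := Complex.summable_ofReal.2 (hW1 a).summable
    set main : Z → ℂ := fun z => (W a z : ℂ) * (1 + Complex.I * θ * ((y z + u (b a z) : ℝ) : ℂ)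
        + (θ : ℂ) ^ 2 * ((w (b a z) - y z * u (b a z) - y z ^ 2 / 2 : ℝ) : ℂ)) with hmain
    have hmainS : HasSum main (1 + Complex.I * θ * (u a : ℂ)
        + (θ : ℂ) ^ 2 * ((w a - σ2 / 2 : ℝ) : ℂ)) := by
      have s1 : HasSum (fun z => (W a z : ℂ)) 1 := by
        simpa using Complex.hasSum_ofReal.2 (hW1 a)
      have s2 := (Complex.hasSum_ofReal.2 ((E1 a) ▸ hsu.hasSum)).mul_left (Complex.I * θ)
      have s3 := (Complex.hasSum_ofReal.2 ((E2 a) ▸ hsw.hasSum)).mul_left ((θ : ℂ) ^ 2)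
      convert! (s1.add s2).add s3 using 1
      ext z
      simp only [hmain]
      push_cast
      ring
    set full : Z → ℂ := fun z => (W a z : ℂ) *
      (Complex.exp (Complex.I * (θ * y z : ℝ)) * vth (u (b a z)) (w (b a z)) θ) with hfull
    have hdiff : ∀ z, ‖full z - main z‖ ≤ θ ^ 2 * (W a z * h θ z) := by
      intro z
      simp only [hfull, hmain]
      rw [← mul_sub, norm_mul, Complex.norm_real, Real.norm_of_nonneg (hW0 a z)]
      have := mul_le_mul_of_nonneg_left
        (term_bound (y := y z) (hu (b a z)) (hw (b a z)) hθ) (hW0 a z)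
      refine this.trans (le_of_eq ?_)
      simp only [hh]; ring
    have hds : Summable fun z => ‖full z - main z‖ :=
      Summable.of_nonneg_of_le (fun _ => norm_nonneg _) hdiff ((hWh θ hθ a).mul_left _)
    have hfs : Summable full := by
      have := hds.of_norm.add hmainS.summable
      simpa using this
    have hd : ‖∑' z, full z - ∑' z, main z‖ ≤ θ ^ 2 * ∑' z, W a z * h θ z := by
      rw [← hfs.tsum_sub hmainS.summable, ← tsum_mul_left]
      exact (norm_tsum_le_tsum_norm hds).trans
        (hds.tsum_le_tsum hdiff ((hWh θ hθ a).mul_left _))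
    have hsm : ‖∑' z, main z - (1 - (θ : ℂ) ^ 2 * (σ2 / 2 : ℝ)) * vth (u a) (w a) θ‖
        ≤ θ ^ 2 * (|θ| * (|σ2| * K)) := by
      have : ∑' z, main z - (1 - (θ : ℂ) ^ 2 * (σ2 / 2 : ℝ)) * vth (u a) (w a) θ
          = (θ : ℂ) ^ 2 * (σ2 / 2 : ℝ) * (vth (u a) (w a) θ - 1) := by
        rw [hmainS.tsum_eq]; unfold vth; push_cast; ring
      rw [this, norm_mul, norm_mul, norm_pow, Complex.norm_real, Complex.norm_real,
        Real.norm_eq_abs, Real.norm_eq_abs, sq_abs, abs_div, abs_two]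
      have := mul_le_mul_of_nonneg_left (vth_sub_one (hu a) (hw a) hθ)
        (show 0 ≤ θ ^ 2 * (|σ2| / 2) by positivity)
      nlinarith
    have hle : ∑' z, W a z * h θ z ≤ ∑ a, ∑' z, W a z * h θ z :=
      Finset.single_le_sum (f := fun a => ∑' z, W a z * h θ z)
        (fun a _ => tsum_nonneg fun z => mul_nonneg (hW0 a z) (hh0 θ z)) (Finset.mem_univ a)
    have htri := norm_sub_le_norm_sub_add_norm_sub (∑' z, full z) (∑' z, main z)
      ((1 - (θ : ℂ) ^ 2 * (σ2 / 2 : ℝ)) * vth (u a) (w a) θ)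
    have hle2 := mul_le_mul_of_nonneg_left hle (sq_nonneg θ)
    rw [mul_add]
    linarith

end AnalysisPart
section WalkPart

/-- Linear functional of the centred position. -/
def yfun {d : ℕ} (t ν : Fin d → ℝ) (z : Fin d → ℤ) : ℝ := ∑ i, t i * ((z i : ℝ) - ν i)

/-- twisted expectation -/
def Etw {d : ℕ} (Md : Fin d → ℕ) (μ : Measure (ℕ → (Fin d → ℤ))) (t ν : Fin d → ℝ) (θ : ℝ)
    (k : ℕ) (v : Torus d Md → ℂ) : ℂ :=
  ∫ ω, Complex.exp (Complex.I * (θ * (∑ i, t i * ((ω k i : ℝ) - k * ν i)) : ℝ))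
    * v (projT Md (ω k)) ∂μ

variable {d : ℕ} {Md : Fin d → ℕ} [∀ i, NeZero (Md i)]
  {p : (Fin d → ℤ) → (Fin d → ℤ) → ℝ} {μ : Measure (ℕ → (Fin d → ℤ))}


lemma norm_cexp_I (x : ℝ) : ‖Complex.exp (Complex.I * x)‖ = 1 := by
  rw [mul_comm]; exact Complex.norm_exp_ofReal_mul_I x

lemma torus_bdd (v : Torus d Md → ℂ) : ∃ C, ∀ a, ‖v a‖ ≤ C :=
  ⟨∑ a, ‖v a‖, fun a => Finset.single_le_sum (f := fun a => ‖v a‖)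
    (fun _ _ => norm_nonneg _) (Finset.mem_univ a)⟩

lemma Etw_integrable [IsProbabilityMeasure μ] (t ν : Fin d → ℝ) (θ : ℝ) (k : ℕ)
    (v : Torus d Md → ℂ) :
    Integrable (fun ω : ℕ → (Fin d → ℤ) =>
      Complex.exp (Complex.I * (θ * (∑ i, t i * ((ω k i : ℝ) - k * ν i)) : ℝ))
        * v (projT Md (ω k))) μ := by
  obtain ⟨C, hC⟩ := torus_bdd v
  have hm : Measurable fun ω : ℕ → (Fin d → ℤ) => ω k := measurable_pi_apply k
  have hf : Measurable fun x : Fin d → ℤ =>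
      Complex.exp (Complex.I * (θ * (∑ i, t i * ((x i : ℝ) - k * ν i)) : ℝ))
        * v (projT Md x) := Measurable.of_discrete
  refine Integrable.of_bound (hf.comp hm).aestronglyMeasurable C (ae_of_all _ fun ω => ?_)
  change ‖_ * v (projT Md (ω k))‖ ≤ C
  rw [norm_mul, norm_cexp_I, one_mul]
  exact hC _

lemma Etw_bound [IsProbabilityMeasure μ] (t ν : Fin d → ℝ) (θ : ℝ) (k : ℕ)
    (v : Torus d Md → ℂ) (C : ℝ) (hC : ∀ a, ‖v a‖ ≤ C) : ‖Etw Md μ t ν θ k v‖ ≤ C := by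
  unfold Etw
  have := norm_integral_le_of_norm_le_const (μ := μ) (C := C)
    (f := fun ω => Complex.exp (Complex.I * (θ * (∑ i, t i * ((ω k i : ℝ) - k * ν i)) : ℝ))
    * v (projT Md (ω k))) (ae_of_all _ fun ω => by
      rw [norm_mul, norm_cexp_I, one_mul]
      exact hC _)
  simpa using this

lemma Etw_lin [IsProbabilityMeasure μ] (t ν : Fin d → ℝ) (θ : ℝ) (k : ℕ)
    (v v' : Torus d Md → ℂ) (c : ℂ) :
    Etw Md μ t ν θ k v = Etw Md μ t ν θ k (fun a => v a - c * v' a)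
      + c * Etw Md μ t ν θ k v' := by
  unfold Etw
  have i1 := Etw_integrable (μ := μ) t ν θ k (fun a => v a - c * v' a)
  have i2 := (Etw_integrable (μ := μ) t ν θ k v').const_mul c
  rw [← integral_const_mul, ← integral_add i1 i2]
  congr 1; ext ω
  ring

lemma Etw_zero (hμ : IsRWPELaw p 0 μ) (t ν : Fin d → ℝ) (θ : ℝ) (v : Torus d Md → ℂ) :
    Etw Md μ t ν θ 0 v = v (projT Md 0) := by
  have := hμ.1
  unfold Etw
  have h : ∫ ω, Complex.exp (Complex.I * (θ * (∑ i, t i * ((ω 0 i : ℝ) - (0 : ℕ) * ν i)) : ℝ))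
    * v (projT Md (ω 0)) ∂μ = ∫ _ω, v (projT Md 0) ∂μ := by
    apply integral_congr_ae
    filter_upwards [rwpe_init hμ] with ω hω
    rw [hω]; simp
  rw [h]; simp

lemma Etw_succ (henv : IsPeriodicEnv Md p) (hμ : IsRWPELaw p 0 μ) (t ν : Fin d → ℝ) (θ : ℝ)
    (k : ℕ) (v : Torus d Md → ℂ) :
    Etw Md μ t ν θ (k + 1) v = Etw Md μ t ν θ k (fun a => ∑' z, (p (repT Md a) z : ℂ) *
      (Complex.exp (Complex.I * (θ * yfun t ν z : ℝ)) * v (a + projT Md z))) := by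
  obtain ⟨h0, h1, hper⟩ := henv
  obtain ⟨C, hC⟩ := torus_bdd v
  unfold Etw
  have h := rwpe_step h0 h1 hμ k (fun x =>
    Complex.exp (Complex.I * (θ * (∑ i, t i * ((x i : ℝ) - (k + 1 : ℕ) * ν i)) : ℝ))
    * v (projT Md x)) C (fun x => by rw [norm_mul, norm_cexp_I, one_mul]; exact hC _)
  rw [h]
  congr 1; ext ω
  rw [← tsum_mul_left]
  congr 1; ext z
  rw [env_rep hper, projT_add]
  have e : Complex.exp (Complex.I * (θ * (∑ i, t i * (((ω k + z) i : ℤ) - (k + 1 : ℕ) * ν i)) : ℝ))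
      = Complex.exp (Complex.I * (θ * (∑ i, t i * ((ω k i : ℝ) - k * ν i)) : ℝ))
        * Complex.exp (Complex.I * (θ * yfun t ν z : ℝ)) := by
    rw [← Complex.exp_add, ← mul_add, ← Complex.ofReal_add, ← mul_add]
    unfold yfun
    rw [← Finset.sum_add_distrib]
    congr 4
    apply Finset.sum_congr rfl
    intro i _
    simp only [Pi.add_apply]
    push_cast
    ring
  rw [e]; ring

lemma Etw_iter (henv : IsPeriodicEnv Md p) (hμ : IsRWPELaw p 0 μ) (t ν : Fin d → ℝ) (θ : ℝ)
    (v : Torus d Md → ℂ) (l : ℂ) (ε L : ℝ) (hε : 0 ≤ ε) (hL1 : 1 ≤ L) (hL : ‖l‖ ≤ L)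
    (hv : ∀ a, ‖∑' z, (p (repT Md a) z : ℂ) *
      (Complex.exp (Complex.I * (θ * yfun t ν z : ℝ)) * v (a + projT Md z)) - l * v a‖ ≤ ε)
    (n : ℕ) :
    ‖Etw Md μ t ν θ n v - l ^ n * v (projT Md 0)‖ ≤ n * ε * L ^ n := by
  have := hμ.1
  induction n with
  | zero => rw [Etw_zero hμ]; simp
  | succ k ih =>
    rw [Etw_succ henv hμ, Etw_lin t ν θ k _ v l]
    have e : ∀ A B c : ℂ, A + l * B - l ^ (k + 1) * c = A + l * (B - l ^ k * c) := by
      intros; ring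
    rw [e]
    refine (norm_add_le _ _).trans ?_
    rw [norm_mul]
    have h1 := Etw_bound (μ := μ) t ν θ k _ ε hv
    have h2 := mul_le_mul hL ih (norm_nonneg _) (by linarith)
    have h3 : 1 ≤ L ^ (k + 1) := one_le_pow₀ hL1
    have h4 : L * (k * ε * L ^ k) = k * ε * L ^ (k + 1) := by ring
    have h5 : ε * 1 ≤ ε * L ^ (k + 1) := mul_le_mul_of_nonneg_left h3 hε
    have h6 : ((k + 1 : ℕ) : ℝ) * ε * L ^ (k + 1) = k * ε * L ^ (k + 1) + ε * L ^ (k + 1) := by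
      push_cast; ring
    linarith

lemma walk_char_tendsto (henv : IsPeriodicEnv Md p) (hμ : IsRWPELaw p 0 μ) (t ν : Fin d → ℝ)
    (hy1 : ∀ a : Torus d Md, Summable fun z => p (repT Md a) z * yfun t ν z)
    (hy : ∀ a : Torus d Md, Summable fun z => p (repT Md a) z * yfun t ν z ^ 2)
    (u w : Torus d Md → ℝ) (σ2 : ℝ)
    (E1 : ∀ a, ∑' z, p (repT Md a) z * (yfun t ν z + u (a + projT Md z)) = u a)
    (E2 : ∀ a, ∑' z, p (repT Md a) z * (w (a + projT Md z) - yfun t ν z * u (a + projT Md z)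
      - yfun t ν z ^ 2 / 2) = w a - σ2 / 2) (s : ℝ) :
    Tendsto (fun n : ℕ => Etw Md μ t ν (s / Real.sqrt n) n (fun _ => 1)) atTop
      (𝓝 (Complex.exp (-(σ2 * s ^ 2 / 2 : ℝ)))) := by
  have hprob := hμ.1
  set K : ℝ := ∑ a, |u a| + ∑ a, |w a| with hK
  have hu : ∀ a, |u a| ≤ K := fun a => by
    have := Finset.single_le_sum (f := fun a => |u a|) (fun _ _ => abs_nonneg _)
      (Finset.mem_univ a)
    have h2 : 0 ≤ ∑ a, |w a| := Finset.sum_nonneg fun _ _ => abs_nonneg _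
    linarith
  have hw : ∀ a, |w a| ≤ K := fun a => by
    have := Finset.single_le_sum (f := fun a => |w a|) (fun _ _ => abs_nonneg _)
      (Finset.mem_univ a)
    have h2 : 0 ≤ ∑ a, |u a| := Finset.sum_nonneg fun _ _ => abs_nonneg _
    linarith
  obtain ⟨η, hη0, hη⟩ := quasi_eigen (fun a => p (repT Md a)) (fun a z => henv.1 _ z)
    (fun a => henv.2.1 _) (yfun t ν) hy1 hy (fun a z => a + projT Md z) u w K σ2 hu hw E1 E2
  set θ : ℕ → ℝ := fun n => s / Real.sqrt n with hθ
  have hθ0 : Tendsto θ atTop (𝓝 0) :=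
    tendsto_const_nhds.div_atTop (Real.tendsto_sqrt_atTop.comp tendsto_natCast_atTop_atTop)
  have hθ1 : ∀ᶠ n in atTop, |θ n| ≤ 1 := by
    have := hθ0.eventually (Metric.closedBall_mem_nhds (0 : ℝ) one_pos)
    filter_upwards [this] with n hn
    simpa using hn
  have hθsq : ∀ n : ℕ, 0 < n → n * θ n ^ 2 = s ^ 2 := by
    intro n hn
    have : (0 : ℝ) < n := by exact_mod_cast hn
    simp only [hθ]
    rw [div_pow, Real.sq_sqrt this.le]
    field_simp
  set V : ℕ → Torus d Md → ℂ := fun n a => vth (u a) (w a) (θ n) with hV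
  set l : ℕ → ℂ := fun n => 1 - (θ n : ℂ) ^ 2 * (σ2 / 2 : ℝ) with hl
  -- step 1
  have s1 : Tendsto (fun n => Etw Md μ t ν (θ n) n (fun _ => 1) - Etw Md μ t ν (θ n) n (V n))
      atTop (𝓝 0) := by
    have hb : Tendsto (fun n => |θ n| * (2 * K)) atTop (𝓝 0) := by
      simpa using hθ0.abs.mul_const (2 * K)
    refine squeeze_zero_norm' ?_ hb
    filter_upwards [hθ1] with n hn
    rw [Etw_lin t ν (θ n) n (fun _ => 1) (V n) 1, one_mul, add_sub_cancel_right]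
    apply Etw_bound
    intro a
    rw [one_mul, norm_sub_rev]
    exact vth_sub_one (hu a) (hw a) hn
  -- step 2
  have s2 : Tendsto (fun n => Etw Md μ t ν (θ n) n (V n) - l n ^ n * V n (projT Md 0))
      atTop (𝓝 0) := by
    have hb : Tendsto (fun n => s ^ 2 * |η (θ n)| * Real.exp (s ^ 2 * (|σ2| / 2)))
        atTop (𝓝 0) := by
      have := ((hη0.comp hθ0).abs.const_mul (s ^ 2)).mul_const (Real.exp (s ^ 2 * (|σ2| / 2)))
      simpa using this
    refine squeeze_zero_norm' ?_ hb
    filter_upwards [hθ1, eventually_gt_atTop 0] with n hn hn0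
    have hx : 0 ≤ θ n ^ 2 * (|σ2| / 2) := by positivity
    have hit := Etw_iter henv hμ t ν (θ n) (V n) (l n) (θ n ^ 2 * |η (θ n)|)
      (1 + θ n ^ 2 * (|σ2| / 2)) (by positivity) (by linarith) (by
        simp only [hl]
        refine (norm_sub_le _ _).trans ?_
        rw [norm_one, norm_mul, norm_pow, Complex.norm_real, Complex.norm_real,
          Real.norm_eq_abs, Real.norm_eq_abs, sq_abs, abs_div, abs_two]) (fun a =>
        (hη (θ n) hn a).trans (mul_le_mul_of_nonneg_left (le_abs_self _) (sq_nonneg _))) n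
    refine hit.trans ?_
    rw [← mul_assoc, hθsq n hn0]
    refine mul_le_mul_of_nonneg_left ?_ (by positivity)
    calc (1 + θ n ^ 2 * (|σ2| / 2)) ^ n ≤ (Real.exp (θ n ^ 2 * (|σ2| / 2))) ^ n := by
          refine pow_le_pow_left₀ (by linarith) ?_ n
          rw [add_comm]; exact Real.add_one_le_exp _
      _ = Real.exp (s ^ 2 * (|σ2| / 2)) := by
          rw [← Real.exp_nat_mul, ← mul_assoc, hθsq n hn0]
  -- step 3
  have s3 : Tendsto (fun n => l n ^ n * V n (projT Md 0)) atTop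
      (𝓝 (Complex.exp (-(σ2 * s ^ 2 / 2 : ℝ)))) := by
    have a1 := Complex.tendsto_one_add_div_pow_exp (-(σ2 * s ^ 2 / 2 : ℝ))
    have a2 : Tendsto (fun n => V n (projT Md 0)) atTop (𝓝 1) := by
      have hc : Continuous fun x : ℝ => vth (u (projT Md 0)) (w (projT Md 0)) x := by
        unfold vth; fun_prop
      have := (hc.tendsto 0).comp hθ0
      simpa [hV, vth, Function.comp_def] using this
    have a3 := a1.mul a2
    rw [mul_one] at a3
    refine a3.congr' ?_
    filter_upwards [eventually_gt_atTop 0] with n hn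
    congr 2
    simp only [hl]
    have hn' : (n : ℂ) ≠ 0 := by exact_mod_cast hn.ne'
    have hs : (n : ℂ) * (θ n : ℂ) ^ 2 = (s : ℂ) ^ 2 := by exact_mod_cast hθsq n hn
    push_cast
    rw [← hs]
    field_simp
    ring
  have := (s1.add s2).add s3
  simp only [zero_add] at this
  refine this.congr fun n => ?_
  simp only [hθ]
  ring

end WalkPart
section IdentPart

variable {d : ℕ} {Md : Fin d → ℕ} [∀ i, NeZero (Md i)]
  {p : (Fin d → ℤ) → (Fin d → ℤ) → ℝ}

/-- Splitting a sum over jumps according to the class of the end point. -/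
lemma tsum_split (a : Torus d Md) (F : (Fin d → ℤ) → ℝ) (hF : Summable F)
    (v : Torus d Md → ℝ) :
    ∑' z, F z * v (a + projT Md z)
      = ∑ b, (∑' z, if a + projT Md z = b then F z else 0) * v b := by
  have hs : ∀ b : Torus d Md, Summable fun z => (if a + projT Md z = b then F z else 0) := by
    intro b
    refine Summable.of_norm_bounded hF.norm fun z => ?_
    split_ifs <;> simp
  simp only [← tsum_mul_right]
  rw [← Summable.tsum_finsetSum (fun b _ => (hs b).mul_right (v b))]
  congr 1; ext z
  simp [ite_mul]

/-- centred jump matrix -/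
def cjump (Md : Fin d → ℕ) [∀ i, NeZero (Md i)] (p : (Fin d → ℤ) → (Fin d → ℤ) → ℝ)
    (ν : Fin d → ℝ) (a b : Torus d Md) (i : Fin d) : ℝ :=
  ∑' z : Fin d → ℤ, if a + projT Md z = b then p (repT Md a) z * ((z i : ℝ) - ν i) else 0

lemma mom_summable (henv : IsPeriodicEnv Md p)
    (hmom2 : ∀ t : Torus d Md,
      Summable (fun y : Fin d → ℤ => p (repT Md t) y * (∑ i, |(y i : ℝ)|) ^ 2))
    (a : Torus d Md) (q : (Fin d → ℤ) → ℝ) (C : ℝ)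
    (hq : ∀ z, |q z| ≤ C * (1 + (∑ i, |(z i : ℝ)|) ^ 2)) :
    Summable fun z => p (repT Md a) z * q z := by
  refine Summable.of_norm_bounded
    (g := fun z => C * (p (repT Md a) z + p (repT Md a) z * (∑ i, |(z i : ℝ)|) ^ 2))
    (((henv.2.1 _).summable.add (hmom2 a)).mul_left C) fun z => ?_
  rw [norm_mul, Real.norm_of_nonneg (henv.1 _ _), Real.norm_eq_abs]
  have := mul_le_mul_of_nonneg_left (hq z) (henv.1 (repT Md a) z)
  linarith

lemma coord_bound (ν : Fin d → ℝ) (z : Fin d → ℤ) (i : Fin d) :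
    |(z i : ℝ) - ν i| ≤ (1 + |ν i|) * (1 + ∑ i, |(z i : ℝ)|) := by
  have h1 := abs_sub (z i : ℝ) (ν i)
  have h2 : |(z i : ℝ)| ≤ ∑ i, |(z i : ℝ)| :=
    Finset.single_le_sum (f := fun i => |(z i : ℝ)|) (fun _ _ => abs_nonneg _) (Finset.mem_univ i)
  have h3 := abs_nonneg (ν i)
  have h4 := abs_nonneg (z i : ℝ)
  nlinarith

lemma coord_summable (henv : IsPeriodicEnv Md p)
    (hmom2 : ∀ t : Torus d Md,
      Summable (fun y : Fin d → ℤ => p (repT Md t) y * (∑ i, |(y i : ℝ)|) ^ 2))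
    (a : Torus d Md) (ν : Fin d → ℝ) (i : Fin d) :
    Summable fun z => p (repT Md a) z * ((z i : ℝ) - ν i) := by
  refine mom_summable henv hmom2 a _ (2 * (1 + |ν i|)) fun z => ?_
  refine (coord_bound ν z i).trans ?_
  set S := ∑ i, |(z i : ℝ)|
  have : 1 + S ≤ 2 * (1 + S ^ 2) := by nlinarith [sq_nonneg (S - 1)]
  have := mul_le_mul_of_nonneg_left this (show 0 ≤ 1 + |ν i| by positivity)
  linarith

lemma coord2_summable (henv : IsPeriodicEnv Md p)
    (hmom2 : ∀ t : Torus d Md,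
      Summable (fun y : Fin d → ℤ => p (repT Md t) y * (∑ i, |(y i : ℝ)|) ^ 2))
    (a : Torus d Md) (ν : Fin d → ℝ) (i j : Fin d) :
    Summable fun z => p (repT Md a) z * (((z i : ℝ) - ν i) * ((z j : ℝ) - ν j)) := by
  refine mom_summable henv hmom2 a _ (2 * ((1 + |ν i|) * (1 + |ν j|))) fun z => ?_
  rw [abs_mul]
  have h0 : 0 ≤ ∑ i, |(z i : ℝ)| := Finset.sum_nonneg fun _ _ => abs_nonneg _
  refine (mul_le_mul (coord_bound ν z i) (coord_bound ν z j) (abs_nonneg _)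
    (by positivity)).trans ?_
  set S := ∑ i, |(z i : ℝ)|
  have : (1 + S) * (1 + S) ≤ 2 * (1 + S ^ 2) := by nlinarith [sq_nonneg (S - 1)]
  have := mul_le_mul_of_nonneg_left this (show 0 ≤ (1 + |ν i|) * (1 + |ν j|) by positivity)
  linarith

lemma ind_nonneg (henv : IsPeriodicEnv Md p) (a b : Torus d Md) : 0 ≤ indMatrix Md p a b := by
  simp only [indMatrix, Matrix.of_apply]
  refine tsum_nonneg fun z => ?_
  split_ifs
  · exact henv.1 _ _
  · exact le_rfl

lemma ind_split (henv : IsPeriodicEnv Md p) (a : Torus d Md) (v : Torus d Md → ℝ) :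
    ∑' z, p (repT Md a) z * v (a + projT Md z) = Matrix.mulVec (indMatrix Md p) v a := by
  rw [tsum_split a _ (henv.2.1 _).summable v]
  rfl

lemma ind_row (henv : IsPeriodicEnv Md p) (a : Torus d Md) : ∑ b, indMatrix Md p a b = 1 := by
  have h := ind_split henv a (fun _ => 1)
  simp only [mul_one] at h
  rw [(henv.2.1 _).tsum_eq] at h
  rw [h]; simp [Matrix.mulVec, dotProduct]

lemma ind_cond (henv : IsPeriodicEnv Md p)
    (hmom2 : ∀ t : Torus d Md,
      Summable (fun y : Fin d → ℤ => p (repT Md t) y * (∑ i, |(y i : ℝ)|) ^ 2))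
    (ν : Fin d → ℝ) (a b : Torus d Md) (i : Fin d) :
    indMatrix Md p a b * (condJump Md p a b i - ν i) = cjump Md p ν a b i := by
  have hsp : Summable fun z => (if a + projT Md z = b then p (repT Md a) z else 0) := by
    refine Summable.of_norm_bounded (henv.2.1 (repT Md a)).summable.norm fun z => ?_
    split_ifs <;> simp
  have hz : Summable fun z : Fin d → ℤ =>
      (if a + projT Md z = b then p (repT Md a) z * (z i : ℝ) else 0) := by
    have h0 := coord_summable henv hmom2 a 0 i
    simp only [Pi.zero_apply, sub_zero] at h0
    refine Summable.of_norm_bounded h0.norm fun z => ?_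
    split_ifs
    · exact le_rfl
    · rw [norm_zero]; exact norm_nonneg _
  have hdef : indMatrix Md p a b = ∑' z, if a + projT Md z = b then p (repT Md a) z else 0 := rfl
  have hc : cjump Md p ν a b i
      = (∑' z : Fin d → ℤ, if a + projT Md z = b then p (repT Md a) z * (z i : ℝ) else 0)
        - indMatrix Md p a b * ν i := by
    rw [hdef, ← tsum_mul_right, ← hz.tsum_sub (hsp.mul_right _)]
    unfold cjump
    congr 1; ext z
    split_ifs <;> ring
  by_cases h : indMatrix Md p a b = 0
  · have hall : ∀ z, (if a + projT Md z = b then p (repT Md a) z else 0) = 0 := by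
      have h2 := h
      rw [hdef] at h2
      have := (hsp.hasSum_iff.2 h2)
      rw [hasSum_zero_iff_of_nonneg (fun z => by
        change (0 : ℝ) ≤ if a + projT Md z = b then p (repT Md a) z else 0
        split_ifs
        · exact henv.1 _ _
        · exact le_rfl)] at this
      exact fun z => congrFun this z
    rw [h, zero_mul]
    unfold cjump
    symm
    refine (tsum_congr fun z => ?_).trans tsum_zero
    have := hall z
    split_ifs with hh
    · rw [if_pos hh] at this; rw [this, zero_mul]
    · rfl
  · rw [hc]
    simp only [condJump, if_neg h]
    field_simp

/-- mean centred jump -/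
def gvec (Md : Fin d → ℕ) [∀ i, NeZero (Md i)] (p : (Fin d → ℤ) → (Fin d → ℤ) → ℝ)
    (ν : Fin d → ℝ) (j : Fin d) (a : Torus d Md) : ℝ :=
  ∑' z : Fin d → ℤ, p (repT Md a) z * ((z j : ℝ) - ν j)

lemma cjump_split (henv : IsPeriodicEnv Md p)
    (hmom2 : ∀ t : Torus d Md,
      Summable (fun y : Fin d → ℤ => p (repT Md t) y * (∑ i, |(y i : ℝ)|) ^ 2))
    (ν : Fin d → ℝ) (a : Torus d Md) (i : Fin d) (v : Torus d Md → ℝ) :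
    ∑' z : Fin d → ℤ, p (repT Md a) z * ((z i : ℝ) - ν i) * v (a + projT Md z)
      = ∑ b, cjump Md p ν a b i * v b :=
  tsum_split a _ (coord_summable henv hmom2 a ν i) v

lemma gvec_eq (henv : IsPeriodicEnv Md p)
    (hmom2 : ∀ t : Torus d Md,
      Summable (fun y : Fin d → ℤ => p (repT Md t) y * (∑ i, |(y i : ℝ)|) ^ 2))
    (ν : Fin d → ℝ) (a : Torus d Md) (i : Fin d) :
    ∑ b, cjump Md p ν a b i = gvec Md p ν i a := by
  have h := cjump_split henv hmom2 ν a i (fun _ => 1)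
  simp only [mul_one] at h
  exact h.symm

lemma gvec_center (henv : IsPeriodicEnv Md p)
    (hmom2 : ∀ t : Torus d Md,
      Summable (fun y : Fin d → ℤ => p (repT Md t) y * (∑ i, |(y i : ℝ)|) ^ 2))
    {π : Torus d Md → ℝ} (hπ : IsStationaryDist (indMatrix Md p) π) (i : Fin d) :
    ∑ a, π a * gvec Md p (driftVec Md p π) i a = 0 := by
  have h : ∀ a, gvec Md p (driftVec Md p π) i a
      = ∑' z : Fin d → ℤ, p (repT Md a) z * (z i : ℝ) - driftVec Md p π i := by
    intro a
    have h0 := coord_summable henv hmom2 a 0 i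
    simp only [Pi.zero_apply, sub_zero] at h0
    unfold gvec
    have e : driftVec Md p π i = ∑' z, p (repT Md a) z * driftVec Md p π i := by
      rw [tsum_mul_right, (henv.2.1 _).tsum_eq, one_mul]
    conv_rhs => rw [e]
    rw [← h0.tsum_sub ((henv.2.1 _).summable.mul_right _)]
    congr 1; ext z; ring
  simp only [h, mul_sub, Finset.sum_sub_distrib, ← Finset.sum_mul, hπ.2.1]
  simp [driftVec]

lemma cov_eq (henv : IsPeriodicEnv Md p)
    (hmom2 : ∀ t : Torus d Md,
      Summable (fun y : Fin d → ℤ => p (repT Md t) y * (∑ i, |(y i : ℝ)|) ^ 2))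
    (π : Torus d Md → ℝ) (n : ℕ) (i j : Fin d) :
    covSeriesTerm Md p π n i j = ∑ x, ∑ y, π x * cjump Md p (driftVec Md p π) x y i *
      Matrix.mulVec ((indMatrix Md p) ^ n) (gvec Md p (driftVec Md p π) j) y := by
  unfold covSeriesTerm
  refine Finset.sum_congr rfl fun x _ => Finset.sum_congr rfl fun y _ => ?_
  simp only [Matrix.mulVec, dotProduct, Finset.mul_sum]
  refine Finset.sum_congr rfl fun z _ => ?_
  rw [← gvec_eq henv hmom2, Finset.mul_sum, Finset.mul_sum]
  refine Finset.sum_congr rfl fun w _ => ?_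
  rw [← ind_cond henv hmom2, ← ind_cond henv hmom2]
  ring

end IdentPart
/-- **Central limit theorem for RWPE.** If the induced chain on the torus is irreducible
and aperiodic with stationary distribution `π` and the jump distributions have finite
second moments, then `(Xₙ - nν)/√n` converges in distribution to the centered Gaussian
law `N(0, Σ)`; the correlation series defining `Σ` converges. Convergence in
distribution to `N(0, Σ)` is expressed, via the Cramér–Wold device, as weak
convergence of every linear functional `⟨t, (Xₙ - nν)/√n⟩` to the one-dimensional
Gaussian law `N(0, ⟨t, Σ t⟩)`. -/
theorem rwpe_clt (d : ℕ) (hd : 0 < d) (Md : Fin d → ℕ) [∀ i, NeZero (Md i)]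
    (p : (Fin d → ℤ) → (Fin d → ℤ) → ℝ) (henv : IsPeriodicEnv Md p)
    (hirr : MatIrreducible (indMatrix Md p)) (haper : MatAperiodic (indMatrix Md p))
    (π : Torus d Md → ℝ) (hπ : IsStationaryDist (indMatrix Md p) π)
    (hmom2 : ∀ t : Torus d Md,
      Summable (fun y : Fin d → ℤ => p (repT Md t) y * (∑ i, |(y i : ℝ)|) ^ 2))
    (μ : Measure (ℕ → (Fin d → ℤ))) (hμ : IsRWPELaw p 0 μ) :
    (∀ i j : Fin d, Summable (fun n : ℕ => covSeriesTerm Md p π n i j)) ∧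
    ∀ t : Fin d → ℝ, ∀ f : BoundedContinuousFunction ℝ ℝ,
      Tendsto (fun n : ℕ =>
          ∫ ω, f (∑ i, t i * (((ω n i : ℝ) - n * driftVec Md p π i) / Real.sqrt n)) ∂μ)
        atTop
        (𝓝 (∫ x, f x ∂(gaussianReal 0
          (∑ i, ∑ j, t i * covSigma Md p π i j * t j).toNNReal))) := by
  set ν := driftVec Md p π with hν
  set P := indMatrix Md p with hP
  have hP0 : ∀ a b, 0 ≤ P a b := ind_nonneg henv
  have hProw : ∀ a, ∑ b, P a b = 1 := ind_row henv
  have hsg : ∀ j, Summable fun n : ℕ => Matrix.mulVec (P ^ n) (gvec Md p ν j) := fun j =>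
    mat_summable hP0 hProw hirr haper hπ _ (gvec_center henv hmom2 hπ j)
  set uu : Fin d → Torus d Md → ℝ := fun j => ∑' n : ℕ, Matrix.mulVec (P ^ n) (gvec Md p ν j)
    with huu
  have hcov : ∀ i j, HasSum (fun n : ℕ => covSeriesTerm Md p π n i j)
      (∑ x, ∑ y, π x * cjump Md p ν x y i * uu j y) := by
    intro i j
    have : (fun n : ℕ => covSeriesTerm Md p π n i j) = fun n : ℕ =>
        ∑ x, ∑ y, π x * cjump Md p ν x y i * Matrix.mulVec (P ^ n) (gvec Md p ν j) y := by
      ext n; exact cov_eq henv hmom2 π n i j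
    rw [this]
    refine hasSum_sum fun x _ => hasSum_sum fun y _ => HasSum.mul_left _ ?_
    exact (Pi.hasSum.1 (hsg j).hasSum) y
  refine ⟨fun i j => (hcov i j).summable, fun t => ?_⟩
  set σ2 : ℝ := ∑ i, ∑ j, t i * covSigma Md p π i j * t j with hσ
  -- moments of the linear functional
  have hyS : ∀ a : Torus d Md, Summable fun z => p (repT Md a) z * yfun t ν z := by
    intro a
    have := summable_sum (s := Finset.univ) fun i _ =>
      (coord_summable henv hmom2 a ν i).mul_left (t i)
    refine this.congr fun z => ?_
    simp only [yfun, Finset.mul_sum]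
    exact Finset.sum_congr rfl fun i _ => by ring
  have hysq : ∀ z, yfun t ν z ^ 2
      = ∑ i, ∑ j, t i * t j * (((z i : ℝ) - ν i) * ((z j : ℝ) - ν j)) := by
    intro z
    rw [sq]; simp only [yfun, Finset.sum_mul_sum]
    exact Finset.sum_congr rfl fun i _ => Finset.sum_congr rfl fun j _ => by ring
  have hy2H : ∀ a : Torus d Md, HasSum (fun z => p (repT Md a) z * yfun t ν z ^ 2)
      (∑ i, ∑ j, t i * t j *
        ∑' z : Fin d → ℤ, p (repT Md a) z * (((z i : ℝ) - ν i) * ((z j : ℝ) - ν j))) := by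
    intro a
    have := hasSum_sum (s := Finset.univ) fun i _ => hasSum_sum (s := Finset.univ) fun j _ =>
      (coord2_summable henv hmom2 a ν i j).hasSum.mul_left (t i * t j)
    convert! this using 1
    ext z
    rw [hysq, Finset.mul_sum]
    refine Finset.sum_congr rfl fun i _ => ?_
    rw [Finset.mul_sum]
    exact Finset.sum_congr rfl fun j _ => by ring
  set u : Torus d Md → ℝ := fun a => ∑ j, t j * uu j a with hu
  -- sums of the functional times a function of the end point
  have hyv : ∀ (a : Torus d Md) (v : Torus d Md → ℝ),
      HasSum (fun z => p (repT Md a) z * yfun t ν z * v (a + projT Md z))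
        (∑ i, t i * ∑ b, cjump Md p ν a b i * v b) := by
    intro a v
    have hs : ∀ i, Summable fun z : Fin d → ℤ =>
        p (repT Md a) z * ((z i : ℝ) - ν i) * v (a + projT Md z) := by
      intro i
      refine Summable.of_norm_bounded
        ((coord_summable henv hmom2 a ν i).norm.mul_right (∑ b, |v b|)) fun z => ?_
      rw [norm_mul]
      refine mul_le_mul_of_nonneg_left ?_ (norm_nonneg _)
      exact Finset.single_le_sum (f := fun b => |v b|) (fun _ _ => abs_nonneg _)
        (Finset.mem_univ _)
    have := hasSum_sum (s := Finset.univ) fun i _ => (hs i).hasSum.mul_left (t i)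
    simp only [cjump_split henv hmom2] at this
    convert! this using 1
    ext z
    simp only [yfun, Finset.mul_sum, Finset.sum_mul]
    exact Finset.sum_congr rfl fun i _ => by ring
  have hPv : ∀ (a : Torus d Md) (v : Torus d Md → ℝ),
      HasSum (fun z => p (repT Md a) z * v (a + projT Md z)) (Matrix.mulVec P v a) := by
    intro a v
    have hs : Summable fun z => p (repT Md a) z * v (a + projT Md z) := by
      refine Summable.of_norm_bounded
        ((henv.2.1 (repT Md a)).summable.norm.mul_right (∑ b, |v b|)) fun z => ?_
      rw [norm_mul]
      refine mul_le_mul_of_nonneg_left ?_ (norm_nonneg _)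
      exact Finset.single_le_sum (f := fun b => |v b|) (fun _ _ => abs_nonneg _)
        (Finset.mem_univ _)
    rw [hP, ← ind_split henv a v]
    exact hs.hasSum
  have hyg : ∀ a : Torus d Md, HasSum (fun z => p (repT Md a) z * yfun t ν z)
      (∑ j, t j * gvec Md p ν j a) := by
    intro a
    have := hyv a (fun _ => 1)
    simpa only [mul_one, gvec_eq henv hmom2] using this
  have hPu : ∀ a, Matrix.mulVec P u a + ∑ j, t j * gvec Md p ν j a = u a := by
    intro a
    have hj : ∀ j, Matrix.mulVec P (uu j) a + gvec Md p ν j a = uu j a := fun j =>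
      congrFun (mat_poisson (gvec Md p ν j) (hsg j)) a
    have e : Matrix.mulVec P u a = ∑ j, t j * Matrix.mulVec P (uu j) a := by
      simp only [hu, Matrix.mulVec, dotProduct, Finset.mul_sum]
      rw [Finset.sum_comm]
      exact Finset.sum_congr rfl fun i _ => Finset.sum_congr rfl fun j _ => by ring
    rw [e, ← Finset.sum_add_distrib]
    simp only [hu]
    exact Finset.sum_congr rfl fun j _ => by rw [← mul_add, hj]
  have E1 : ∀ a, ∑' z, p (repT Md a) z * (yfun t ν z + u (a + projT Md z)) = u a := by
    intro a
    have := (hyg a).add (hPv a u)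
    rw [← hPu a, add_comm, ← this.tsum_eq]
    congr 1; ext z; ring
  set Y2 : Torus d Md → ℝ := fun a => ∑ i, ∑ j, t i * t j *
        ∑' z : Fin d → ℤ, p (repT Md a) z * (((z i : ℝ) - ν i) * ((z j : ℝ) - ν j)) with hY2
  set YU : Torus d Md → ℝ := fun a => ∑ i, t i * ∑ b, cjump Md p ν a b i * u b with hYU
  have hσ2 : σ2 = ∑ a, π a * Y2 a + 2 * ∑ a, π a * YU a := by
    have e1 : ∑ a, π a * Y2 a = ∑ i, ∑ j, t i * (∑ a : Torus d Md, π a * ∑' y : Fin d → ℤ,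
      p (repT Md a) y * ((y i : ℝ) - ν i) * ((y j : ℝ) - ν j)) * t j := by
      simp only [hY2, Finset.mul_sum, Finset.sum_mul]
      rw [Finset.sum_comm]
      refine Finset.sum_congr rfl fun i _ => ?_
      rw [Finset.sum_comm]
      refine Finset.sum_congr rfl fun j _ => Finset.sum_congr rfl fun a _ => ?_
      simp only [mul_assoc]
      ring
    have e2 : ∑ a, π a * YU a
        = ∑ i, ∑ j, t i * (∑ x, ∑ y, π x * cjump Md p ν x y i * uu j y) * t j := by
      simp only [hYU, hu, Finset.mul_sum, Finset.sum_mul]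
      rw [Finset.sum_comm]
      refine Finset.sum_congr rfl fun i _ => ?_
      conv_rhs => rw [Finset.sum_comm]
      refine Finset.sum_congr rfl fun x _ => ?_
      conv_rhs => rw [Finset.sum_comm]
      refine Finset.sum_congr rfl fun y _ => Finset.sum_congr rfl fun j _ => ?_
      ring
    rw [e1, e2, hσ, Finset.mul_sum, ← Finset.sum_add_distrib]
    refine Finset.sum_congr rfl fun i _ => ?_
    rw [Finset.mul_sum, ← Finset.sum_add_distrib]
    refine Finset.sum_congr rfl fun j _ => ?_
    unfold covSigma
    rw [(hcov i j).tsum_eq]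
    ring
  set h : Torus d Md → ℝ := fun a => σ2 / 2 - Y2 a / 2 - YU a with hh
  have hπh : ∑ a, π a * h a = 0 := by
    have : ∀ a, π a * h a = π a * (σ2 / 2) - (π a * Y2 a) / 2 - π a * YU a := fun a => by
      simp only [hh]; ring
    simp only [this, Finset.sum_sub_distrib, ← Finset.sum_mul, ← Finset.sum_div, hπ.2.1]
    linarith
  have hsh := mat_summable hP0 hProw hirr haper hπ h hπh
  set w : Torus d Md → ℝ := ∑' n : ℕ, Matrix.mulVec (P ^ n) h with hw
  have hPw : ∀ a, Matrix.mulVec P w a + h a = w a := fun a => congrFun (mat_poisson h hsh) a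
  have E2 : ∀ a, ∑' z, p (repT Md a) z * (w (a + projT Md z) - yfun t ν z * u (a + projT Md z)
      - yfun t ν z ^ 2 / 2) = w a - σ2 / 2 := by
    intro a
    have := ((hPv a w).sub (hyv a u)).sub ((hy2H a).div_const 2)
    have e : w a - σ2 / 2 = Matrix.mulVec P w a - YU a - Y2 a / 2 := by
      rw [← hPw a]; simp only [hh]; ring
    rw [e, ← this.tsum_eq]
    congr 1; ext z; ring
  have hchar := walk_char_tendsto henv hμ t ν hyS (fun a => (hy2H a).summable) u w σ2 E1 E2
  have hprob := hμ.1
  have hσ0 : 0 ≤ σ2 := by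
    have h1 := (hchar 1).norm
    have h2 : ‖Complex.exp (-(σ2 * 1 ^ 2 / 2 : ℝ))‖ ≤ 1 :=
      le_of_tendsto' h1 fun n => Etw_bound t ν _ n _ 1 (fun _ => by simp)
    rw [← Complex.ofReal_neg, Complex.norm_exp_ofReal, Real.exp_le_one_iff] at h2
    linarith
  -- Lévy continuity
  set Xn : ℕ → (ℕ → (Fin d → ℤ)) → ℝ := fun n ω =>
    ∑ i, t i * (((ω n i : ℝ) - n * ν i) / Real.sqrt n) with hX
  have hXm : ∀ n, Measurable (Xn n) := by
    intro n
    have hm : Measurable fun ω : ℕ → (Fin d → ℤ) => ω n := measurable_pi_apply n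
    have hf : Measurable fun x : Fin d → ℤ =>
      ∑ i, t i * (((x i : ℝ) - n * ν i) / Real.sqrt n) := Measurable.of_discrete
    exact hf.comp hm
  set ρ : ℕ → ProbabilityMeasure ℝ := fun n =>
    ⟨μ.map (Xn n), Measure.isProbabilityMeasure_map (hXm n).aemeasurable⟩ with hρ
  set ρ0 : ProbabilityMeasure ℝ := ⟨gaussianReal 0 σ2.toNNReal, inferInstance⟩ with hρ0
  have hconv : Tendsto ρ atTop (𝓝 ρ0) := by
    rw [ProbabilityMeasure.tendsto_iff_tendsto_charFun]
    intro s
    have e0 : charFun (ρ0 : Measure ℝ) s = Complex.exp (-(σ2 * s ^ 2 / 2 : ℝ)) := by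
      change charFun (gaussianReal 0 σ2.toNNReal) s = _
      rw [charFun_gaussianReal, Real.coe_toNNReal _ hσ0]
      congr 1; push_cast; ring
    rw [e0]
    refine (hchar s).congr fun n => ?_
    change _ = charFun (μ.map (Xn n)) s
    rw [charFun_apply_real, integral_map (hXm n).aemeasurable
      (by fun_prop)]
    unfold Etw
    congr 1; ext ω
    rw [mul_one]
    congr 1
    have : s / Real.sqrt n * (∑ i, t i * ((ω n i : ℝ) - n * ν i)) = s * Xn n ω := by
      simp only [hX, Finset.mul_sum]
      exact Finset.sum_congr rfl fun i _ => by ring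
    rw [this]; push_cast; ring
  intro f
  have := (ProbabilityMeasure.tendsto_iff_forall_integral_tendsto.1 hconv) f
  refine this.congr fun n => ?_
  change ∫ x, f x ∂(μ.map (Xn n)) = _
  rw [integral_map (hXm n).aemeasurable f.continuous.measurable.aestronglyMeasurable]
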